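/- (The 20/60/20 Rule.) Let X ~ N_k(μ, Σ), α ∈ ℝ^k ∖ {0}, and Y := ⟨α, X⟩ with Var Y > 0. Then Cov[X | Y ∈ A₁] = Cov[X | Y ∈ A₂] = Cov[X | Y ∈ A₃], where A₁ := A(0, q̃), A₂ := A(q̃, 1−q̃), and A₃ := A(1−q̃, 1). -/

import Mathlib

open MeasureTheory ProbabilityTheory Filter Set

noncomputable section

/-- Covariance of two real random variables under the measure `m`. -/
def covar {Ω : Type*} [MeasurableSpace Ω] (m : Measure Ω) (f g : Ω → ℝ) : ℝ :=
  ∫ ω, (f ω - ∫ x, f x ∂m) * (g ω - ∫ x, g x ∂m) ∂m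

/-- Generalized inverse of the CDF of a measure on `ℝ`, `F⁻¹(p) = inf {y | F(y) ≥ p}`,
with values in `EReal` (`⊥` at `p = 0` and `⊤` at `p = 1` for fully supported laws). -/
def invCDF (μ : Measure ℝ) (p : ℝ) : EReal :=
  sInf ((fun x : ℝ => (x : EReal)) '' {x : ℝ | p ≤ cdf μ x})

/-- Quantile conditioning set `A(a,b) = {y : F⁻¹(a) < y < F⁻¹(b)}`. -/
def qSet (μ : Measure ℝ) (a b : ℝ) : Set ℝ :=
  {y : ℝ | invCDF μ a < (y : EReal) ∧ (y : EReal) < invCDF μ b}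

/-- The standard normal quantile function `Φ⁻¹(p) = inf {x | Φ(x) ≥ p}`. -/
def stdNormalQuantile (p : ℝ) : ℝ := sInf {x : ℝ | p ≤ cdf (gaussianReal 0 1) x}

open scoped ENNReal NNReal

section Conditioning

variable {Ω E F : Type*} {mΩ : MeasurableSpace Ω} {mE : MeasurableSpace E} {mF : MeasurableSpace F}
  {P : Measure Ω}

lemma map_cond_preimage {Y : Ω → E} (hY : Measurable Y) {A : Set E} (hA : MeasurableSet A) :
    (P[|Y ⁻¹' A]).map Y = (P.map Y)[|A] := by
  ext s hs
  rw [Measure.map_apply hY hs, cond_apply (hY hA), cond_apply hA, Measure.map_apply hY hA,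
    Measure.map_apply hY (hA.inter hs), preimage_inter]

lemma MeasureTheory.MemLp.cond {f : Ω → ℝ} {p : ℝ≥0∞} (hf : MemLp f p P) {s : Set Ω} (hs : P s ≠ 0) :
    MemLp f p P[|s] :=
  hf.restrict s |>.smul_measure (ENNReal.inv_ne_top.2 hs)

lemma ProbabilityTheory.IndepFun.map_cond_preimage [IsFiniteMeasure P] {Z : Ω → E} {Y : Ω → F} (h : IndepFun Z Y P)
    (hZ : Measurable Z) (hY : Measurable Y) {A : Set F} (hA : MeasurableSet A)
    (hPA : P (Y ⁻¹' A) ≠ 0) :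
    (P[|Y ⁻¹' A]).map Z = P.map Z := by
  ext s hs
  rw [Measure.map_apply hZ hs, Measure.map_apply hZ hs, cond_apply (hY hA), inter_comm,
    h.measure_inter_preimage_eq_mul _ _ hs hA, mul_comm, mul_assoc,
    ENNReal.mul_inv_cancel hPA (measure_ne_top _ _), mul_one]

lemma ProbabilityTheory.IndepFun.cond_preimage [IsFiniteMeasure P] {Z : Ω → E} {Y : Ω → F} (h : IndepFun Z Y P)
    (hZ : Measurable Z) (hY : Measurable Y) {A : Set F} (hA : MeasurableSet A)
    (hPA : P (Y ⁻¹' A) ≠ 0) :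
    IndepFun Z Y P[|Y ⁻¹' A] := by
  rw [indepFun_iff_measure_inter_preimage_eq_mul]
  intro s t hs ht
  have hZs : P[|Y ⁻¹' A] (Z ⁻¹' s) = P (Z ⁻¹' s) := by
    rw [← Measure.map_apply hZ hs, h.map_cond_preimage hZ hY hA hPA, Measure.map_apply hZ hs]
  rw [hZs, cond_apply (hY hA), cond_apply (hY hA), inter_left_comm, ← preimage_inter,
    h.measure_inter_preimage_eq_mul _ _ hs (hA.inter ht), mul_left_comm]

/-- Residuals of a linear regression on `Y` that are independent of `Y` keep their covariance
under conditioning on `Y`. -/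
lemma covariance_cond_preimage_of_indepFun [IsProbabilityMeasure P] {U W Y : Ω → ℝ}
    (hU : Measurable U) (hW : Measurable W) (hY : Measurable Y) (hU2 : MemLp U 2 P)
    (hW2 : MemLp W 2 P) (hY2 : MemLp Y 2 P) (h : IndepFun (fun ω ↦ (U ω, W ω)) Y P)
    {A : Set ℝ} (hA : MeasurableSet A) (hPA : P (Y ⁻¹' A) ≠ 0) (b c : ℝ) :
    cov[fun ω ↦ U ω + b * Y ω, fun ω ↦ W ω + c * Y ω; P[|Y ⁻¹' A]]
      = cov[U, W; P] + b * c * Var[fun y ↦ y; (P.map Y)[|A]] := by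
  have : IsProbabilityMeasure P[|Y ⁻¹' A] := cond_isProbabilityMeasure hPA
  have hZ : Measurable fun ω ↦ (U ω, W ω) := hU.prodMk hW
  have hind := h.cond_preimage hZ hY hA hPA
  have hUq := hU2.cond hPA
  have hWq := hW2.cond hPA
  have hYq := hY2.cond hPA
  have hUY : cov[U, Y; P[|Y ⁻¹' A]] = 0 :=
    (hind.comp measurable_fst measurable_id).covariance_eq_zero hUq hYq
  have hYW : cov[Y, W; P[|Y ⁻¹' A]] = 0 :=
    (hind.comp measurable_snd measurable_id).symm.covariance_eq_zero hYq hWq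
  have hUW : cov[U, W; P[|Y ⁻¹' A]] = cov[U, W; P] := by
    have key (Q : Measure Ω) : cov[U, W; Q]
        = cov[Prod.fst, Prod.snd; Q.map fun ω ↦ (U ω, W ω)] :=
      (covariance_map measurable_fst.aestronglyMeasurable measurable_snd.aestronglyMeasurable
        hZ.aemeasurable).symm
    rw [key, key, h.map_cond_preimage hZ hY hA hPA]
  have hYY : cov[Y, Y; P[|Y ⁻¹' A]] = Var[fun y ↦ y; (P.map Y)[|A]] := by
    rw [covariance_self hY.aemeasurable, ← _root_.map_cond_preimage hY hA,
      variance_map aemeasurable_id' hY.aemeasurable]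
    rfl
  have e (f : Ω → ℝ) (r : ℝ) : (fun ω ↦ f ω + r * Y ω) = f + r • Y := rfl
  rw [e, e, covariance_add_left hUq (hYq.const_smul b) (hWq.add (hYq.const_smul c)),
    covariance_add_right hUq hWq (hYq.const_smul c),
    covariance_add_right (hYq.const_smul b) hWq (hYq.const_smul c), covariance_smul_right,
    covariance_smul_left, covariance_smul_left, covariance_smul_right, hUY, hYW, hUW, hYY]
  ring

/-- For a jointly Gaussian triple, conditioning on `Y ∈ A` changes the covariance of `f` and `g`
only through the conditional variance of `Y`. -/
lemma covariance_cond_preimage_of_hasGaussianLaw {f g Y : Ω → ℝ}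
    (hG : HasGaussianLaw (fun ω ↦ ((f ω, g ω), Y ω)) P) (hf : Measurable f) (hg : Measurable g)
    (hY : Measurable Y) (hVar : Var[Y; P] ≠ 0) {A : Set ℝ} (hA : MeasurableSet A)
    (hPA : P (Y ⁻¹' A) ≠ 0) :
    cov[f, g; P[|Y ⁻¹' A]]
      = cov[fun ω ↦ f ω - cov[f, Y; P] / Var[Y; P] * Y ω,
          fun ω ↦ g ω - cov[g, Y; P] / Var[Y; P] * Y ω; P]
        + cov[f, Y; P] / Var[Y; P] * (cov[g, Y; P] / Var[Y; P])
          * Var[fun y ↦ y; (P.map Y)[|A]] := by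
  have := hG.isProbabilityMeasure
  have hf2 : MemLp f 2 P := hG.fst.fst.memLp_two
  have hg2 : MemLp g 2 P := hG.fst.snd.memLp_two
  have hY2 : MemLp Y 2 P := hG.snd.memLp_two
  set b := cov[f, Y; P] / Var[Y; P]
  set c := cov[g, Y; P] / Var[Y; P]
  have residual {u : Ω → ℝ} (hu2 : MemLp u 2 P) :
      cov[fun ω ↦ u ω - cov[u, Y; P] / Var[Y; P] * Y ω, Y; P] = 0 := by
    rw [covariance_fun_sub_left hu2 (hY2.const_mul _) hY2, covariance_const_mul_left,
      covariance_self hY.aemeasurable, div_mul_cancel₀ _ hVar, sub_self]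
  have hU2 : MemLp (fun ω ↦ f ω - b * Y ω) 2 P := hf2.sub (hY2.const_mul b)
  have hW2 : MemLp (fun ω ↦ g ω - c * Y ω) 2 P := hg2.sub (hY2.const_mul c)
  have hGres : HasGaussianLaw (fun ω ↦ ((f ω - b * Y ω, g ω - c * Y ω), Y ω)) P := by
    let fst := ContinuousLinearMap.fst ℝ (ℝ × ℝ) ℝ
    let snd := ContinuousLinearMap.snd ℝ (ℝ × ℝ) ℝ
    exact hG.map_fun (((((ContinuousLinearMap.fst ℝ ℝ ℝ).comp fst - b • snd).prod
      ((ContinuousLinearMap.snd ℝ ℝ ℝ).comp fst - c • snd))).prod snd)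
  have hind : IndepFun (fun ω ↦ (f ω - b * Y ω, g ω - c * Y ω)) Y P := by
    refine hGres.indepFun_of_covariance_strongDual fun L₁ L₂ ↦ ?_
    have h₁ : L₁ ∘ (fun ω ↦ (f ω - b * Y ω, g ω - c * Y ω))
        = L₁ (1, 0) • (fun ω ↦ f ω - b * Y ω) + L₁ (0, 1) • (fun ω ↦ g ω - c * Y ω) := by
      ext ω
      have : (f ω - b * Y ω, g ω - c * Y ω)
          = (f ω - b * Y ω) • ((1, 0) : ℝ × ℝ) + (g ω - c * Y ω) • ((0, 1) : ℝ × ℝ) := by simp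
      simp only [Function.comp_apply, Pi.add_apply, Pi.smul_apply]
      rw [this, map_add, map_smul, map_smul]
      simp [mul_comm]
    have h₂ : L₂ ∘ Y = L₂ 1 • Y := by
      ext ω
      have : Y ω = Y ω • (1 : ℝ) := by simp
      simp only [Function.comp_apply, Pi.smul_apply]
      rw [this, map_smul]
      simp [mul_comm]
    rw [h₁, h₂, covariance_smul_right, covariance_add_left (hU2.const_smul _) (hW2.const_smul _)
      hY2, covariance_smul_left, covariance_smul_left, residual hf2, residual hg2]
    simp
  simpa using covariance_cond_preimage_of_indepFun (by fun_prop) (by fun_prop) hY hU2 hW2 hY2 hind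
    hA hPA b c

end Conditioning

section Quantiles

variable {ν : Measure ℝ}

lemma setOf_cdf_le_cdf (hν : StrictMono (cdf ν)) (s : ℝ) : {x | cdf ν s ≤ cdf ν x} = Ici s := by
  ext x
  simp [hν.le_iff_le]

lemma invCDF_cdf (hν : StrictMono (cdf ν)) (s : ℝ) : invCDF ν (cdf ν s) = s := by
  rw [invCDF, setOf_cdf_le_cdf hν]
  refine IsLeast.csInf_eq ⟨mem_image_of_mem _ self_mem_Ici, ?_⟩
  rintro _ ⟨x, hx, rfl⟩
  exact EReal.coe_le_coe_iff.2 hx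

lemma invCDF_zero : invCDF ν 0 = ⊥ := by
  refine (EReal.eq_bot_iff_forall_lt _).2 fun y ↦ ?_
  have hle : invCDF ν 0 ≤ ((y - 1 : ℝ) : EReal) := sInf_le ⟨y - 1, cdf_nonneg ν (y - 1), rfl⟩
  exact hle.trans_lt (EReal.coe_lt_coe_iff.2 (sub_one_lt y))

lemma invCDF_one (hν : StrictMono (cdf ν)) : invCDF ν 1 = ⊤ := by
  have : {x | 1 ≤ cdf ν x} = ∅ := by
    ext x
    simpa using (hν (lt_add_one x)).trans_le (cdf_le_one ν _)
  simp [invCDF, this]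

lemma qSet_zero_cdf (hν : StrictMono (cdf ν)) (s : ℝ) : qSet ν 0 (cdf ν s) = Iio s := by
  ext y
  simp [qSet, invCDF_zero, invCDF_cdf hν]

lemma qSet_cdf_cdf (hν : StrictMono (cdf ν)) (s t : ℝ) :
    qSet ν (cdf ν s) (cdf ν t) = Ioo s t := by
  ext y
  simp [qSet, invCDF_cdf hν]

lemma qSet_cdf_one (hν : StrictMono (cdf ν)) (s : ℝ) : qSet ν (cdf ν s) 1 = Ioi s := by
  ext y
  simp [qSet, invCDF_one hν, invCDF_cdf hν]

end Quantiles

section GaussianCDF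

lemma isOpenPosMeasure_gaussianReal (m : ℝ) {v : ℝ≥0} (hv : v ≠ 0) :
    (gaussianReal m v).IsOpenPosMeasure :=
  (gaussianReal_absolutelyContinuous' m hv).isOpenPosMeasure

lemma strictMono_cdf_gaussianReal (m : ℝ) {v : ℝ≥0} (hv : v ≠ 0) :
    StrictMono (cdf (gaussianReal m v)) := by
  have := isOpenPosMeasure_gaussianReal m hv
  intro x y hxy
  have hpos : 0 < gaussianReal m v (Ioc x y) :=
    (isOpen_Ioo.measure_pos _ (nonempty_Ioo.2 hxy)).trans_le (measure_mono Ioo_subset_Ioc_self)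
  rw [← measure_cdf (gaussianReal m v), StieltjesFunction.measure_Ioc, ENNReal.ofReal_pos] at hpos
  linarith

lemma continuous_cdf_gaussianReal (m : ℝ) {v : ℝ≥0} (hv : v ≠ 0) :
    Continuous (cdf (gaussianReal m v)) := by
  have := nullSingletonClass_gaussianReal (μ := m) hv
  refine continuous_iff_continuousAt.2 fun x ↦ ?_
  refine (cdf (gaussianReal m v)).mono.continuousAt_iff_leftLim_eq_rightLim.2 ?_
  have h0 : gaussianReal m v {x} = 0 := measure_singleton x
  rw [← measure_cdf (gaussianReal m v), StieltjesFunction.measure_singleton,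
    ENNReal.ofReal_eq_zero, sub_nonpos] at h0
  rw [StieltjesFunction.rightLim_eq]
  exact le_antisymm ((cdf (gaussianReal m v)).mono.leftLim_le le_rfl) h0

lemma exists_cdf_gaussianReal_eq (m : ℝ) {v : ℝ≥0} (hv : v ≠ 0) {p : ℝ} (hp : p ∈ Ioo (0 : ℝ) 1) :
    ∃ t, cdf (gaussianReal m v) t = p :=
  mem_range_of_exists_le_of_exists_ge (continuous_cdf_gaussianReal m hv)
    ((tendsto_cdf_atBot _).eventually_lt_const hp.1 |>.exists.imp fun _ ↦ le_of_lt)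
    ((tendsto_cdf_atTop _).eventually_const_lt hp.2 |>.exists.imp fun _ ↦ le_of_lt)

lemma cdf_gaussianReal_neg (v : ℝ≥0) (hv : v ≠ 0) (t : ℝ) :
    cdf (gaussianReal 0 v) (-t) = 1 - cdf (gaussianReal 0 v) t := by
  have := nullSingletonClass_gaussianReal (μ := 0) hv
  have hneg : (gaussianReal 0 v).map (fun x ↦ -x) = gaussianReal 0 v := by
    simpa using gaussianReal_map_neg (μ := 0) (v := v)
  rw [cdf_eq_real, cdf_eq_real, ← probReal_compl_eq_one_sub measurableSet_Iic, compl_Iic,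
    measureReal_congr (Ioi_ae_eq_Ici (a := t))]
  conv_lhs => rw [← hneg]
  rw [map_measureReal_apply measurable_neg measurableSet_Iic]
  congr 1
  ext x
  simp

lemma stdNormalQuantile_cdf (t : ℝ) : stdNormalQuantile (cdf (gaussianReal 0 1) t) = t := by
  rw [stdNormalQuantile, setOf_cdf_le_cdf (strictMono_cdf_gaussianReal 0 one_ne_zero), csInf_Ici]

lemma gaussianReal_eq_map_std (m : ℝ) (v : ℝ≥0) :
    gaussianReal m v = (gaussianReal 0 1).map fun x ↦ √(v : ℝ) * x + m := by
  have h := gaussianReal_map_const_mul (μ := 0) (v := 1) √(v : ℝ)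
  have hcomp : (fun x ↦ √(v : ℝ) * x + m) = (fun x ↦ x + m) ∘ fun x ↦ √(v : ℝ) * x := rfl
  rw [hcomp, ← Measure.map_map (by fun_prop) (by fun_prop), h, gaussianReal_map_add_const]
  congr 1
  · simp
  · ext
    simp [Real.sq_sqrt]

lemma cdf_gaussianReal_affine (m : ℝ) {v : ℝ≥0} (hv : v ≠ 0) (t : ℝ) :
    cdf (gaussianReal m v) (√(v : ℝ) * t + m) = cdf (gaussianReal 0 1) t := by
  have hσ : 0 < √(v : ℝ) := Real.sqrt_pos.2 (NNReal.coe_pos.2 (pos_iff_ne_zero.2 hv))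
  rw [cdf_eq_real, cdf_eq_real, gaussianReal_eq_map_std m v,
    map_measureReal_apply (by fun_prop) measurableSet_Iic]
  congr 1
  ext x
  simp [hσ]

lemma variance_cond_gaussianReal (m : ℝ) {v : ℝ≥0} {A : Set ℝ} (hA : MeasurableSet A)
    (hA0 : gaussianReal m v A ≠ 0) :
    Var[fun x ↦ x; (gaussianReal m v)[|A]]
      = v * Var[fun x ↦ x; (gaussianReal 0 1)[|(fun x ↦ √(v : ℝ) * x + m) ⁻¹' A]] := by
  have hmeas : Measurable fun x ↦ √(v : ℝ) * x + m := by fun_prop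
  rw [gaussianReal_eq_map_std m v, Measure.map_apply hmeas hA] at hA0
  have := cond_isProbabilityMeasure hA0
  rw [gaussianReal_eq_map_std m v, ← map_cond_preimage hmeas hA,
    variance_map aemeasurable_id' hmeas.aemeasurable]
  change Var[fun x ↦ √(v : ℝ) * x + m; _] = _
  rw [variance_add_const (by fun_prop), variance_const_mul, Real.sq_sqrt v.coe_nonneg]

lemma variance_cond_gaussianReal_neg (v : ℝ≥0) {A : Set ℝ} (hA : MeasurableSet A) :
    Var[fun x ↦ x; (gaussianReal 0 v)[|(fun x ↦ -x) ⁻¹' A]]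
      = Var[fun x ↦ x; (gaussianReal 0 v)[|A]] := by
  have hneg : (gaussianReal 0 v).map (fun x ↦ -x) = gaussianReal 0 v := by
    simpa using gaussianReal_map_neg (μ := 0) (v := v)
  conv_rhs => rw [← hneg]
  rw [← map_cond_preimage measurable_neg hA, variance_map aemeasurable_id' (by fun_prop)]
  exact variance_fun_neg.symm

end GaussianCDF

lemma isGaussian_map_of_linear_combinations {Ω : Type*} {mΩ : MeasurableSpace Ω} {P : Measure Ω}
    {ι : Type*} [Fintype ι] {X : Ω → ι → ℝ} (hX : Measurable X)
    (h : ∀ c : ι → ℝ, ∃ (m : ℝ) (v : ℝ≥0), P.map (fun ω ↦ ∑ i, c i * X ω i) = gaussianReal m v) :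
    IsGaussian (P.map X) := by
  classical
  refine isGaussian_of_map_eq_gaussianReal fun L ↦ ?_
  obtain ⟨m, v, hmv⟩ := h fun i ↦ L (Pi.single i 1)
  refine ⟨m, v, ?_⟩
  rw [Measure.map_map L.continuous.measurable hX, ← hmv]
  congr 1
  ext ω
  simp only [Function.comp_apply]
  conv_lhs => rw [pi_eq_sum_univ' (X ω), map_sum]
  refine Finset.sum_congr rfl fun i _ ↦ ?_
  rw [map_smul, smul_eq_mul, mul_comm]

/-- **the 20/60/20 rule.** For `X ~ N_k(μ, Σ)` with non-degenerate benchmark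
`Y = ⟨α, X⟩`, the conditional covariance matrices over the 20/60/20 split
`A₁ = A(0, q̃)`, `A₂ = A(q̃, 1−q̃)`, `A₃ = A(1−q̃, 1)` coincide, where `q̃ ∈ (0, 1/2)` is the
value with `Var[V | V < Φ⁻¹(q̃)] = Var[V | Φ⁻¹(q̃) < V < Φ⁻¹(1−q̃)]` for standard normal `V`. -/
theorem twenty_sixty_twenty_rule
    {Ω : Type*} [MeasureSpace Ω] [IsProbabilityMeasure (ℙ : Measure Ω)]
    (k : ℕ) (X : Ω → Fin k → ℝ) (hXmeas : Measurable X)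
    (μ : Fin k → ℝ) (S : Matrix (Fin k) (Fin k) ℝ)
    (hGauss : ∀ c : Fin k → ℝ,
      (ℙ : Measure Ω).map (fun ω => ∑ i, c i * X ω i)
        = gaussianReal (∑ i, c i * μ i)
            (Real.toNNReal (∑ i, ∑ j, c i * S i j * c j)))
    (α : Fin k → ℝ) (hα : α ≠ 0)
    (Y : Ω → ℝ) (hY : Y = fun ω => ∑ i, α i * X ω i)
    (hVarYpos : 0 < variance Y ℙ)
    (q : ℝ) (hq : q ∈ Set.Ioo (0 : ℝ) (1/2))
    (hqdef : variance (fun x => x) ((gaussianReal 0 1)[|Set.Iio (stdNormalQuantile q)])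
      = variance (fun x => x)
          ((gaussianReal 0 1)[|Set.Ioo (stdNormalQuantile q) (stdNormalQuantile (1 - q))]))
    (A₁ A₂ A₃ : Set ℝ)
    (hA₁ : A₁ = qSet ((ℙ : Measure Ω).map Y) 0 q)
    (hA₂ : A₂ = qSet ((ℙ : Measure Ω).map Y) q (1 - q))
    (hA₃ : A₃ = qSet ((ℙ : Measure Ω).map Y) (1 - q) 1) :
    ∀ i j, covar (ℙ[|Y ⁻¹' A₁]) (fun ω => X ω i) (fun ω => X ω j)
        = covar (ℙ[|Y ⁻¹' A₂]) (fun ω => X ω i) (fun ω => X ω j)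
      ∧ covar (ℙ[|Y ⁻¹' A₂]) (fun ω => X ω i) (fun ω => X ω j)
        = covar (ℙ[|Y ⁻¹' A₃]) (fun ω => X ω i) (fun ω => X ω j) := by
  intro i j
  set v : ℝ≥0 := Real.toNNReal (∑ i, ∑ j, α i * S i j * α j)
  set m : ℝ := ∑ i, α i * μ i
  have hYmeas : Measurable Y := by
    rw [hY]
    fun_prop
  have hYlaw : (ℙ : Measure Ω).map Y = gaussianReal m v := by rw [hY, hGauss α]
  have hv : v ≠ 0 := by
    intro hv0
    have hvar := variance_map (X := fun x : ℝ ↦ x) aemeasurable_id' hYmeas.aemeasurable (μ := ℙ)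
    rw [hYlaw, variance_fun_id_gaussianReal, hv0] at hvar
    exact hVarYpos.ne hvar
  have hσ : 0 < √(v : ℝ) := Real.sqrt_pos.2 (NNReal.coe_pos.2 (pos_iff_ne_zero.2 hv))
  obtain ⟨t, ht⟩ := exists_cdf_gaussianReal_eq 0 one_ne_zero
    (p := q) ⟨hq.1, hq.2.trans (by norm_num)⟩
  have ht' : cdf (gaussianReal 0 1) (-t) = 1 - q := by
    rw [cdf_gaussianReal_neg 1 one_ne_zero, ht]
  have htneg : t < -t := by
    rw [← (strictMono_cdf_gaussianReal 0 one_ne_zero).lt_iff_lt, ht, ht']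
    linarith [hq.2]
  have hmono := strictMono_cdf_gaussianReal m hv
  have hqY : q = cdf (gaussianReal m v) (√(v : ℝ) * t + m) := by
    rw [cdf_gaussianReal_affine m hv, ht]
  have hqY' : 1 - q = cdf (gaussianReal m v) (√(v : ℝ) * (-t) + m) := by
    rw [cdf_gaussianReal_affine m hv, ht']
  have hB₁ : A₁ = Iio (√(v : ℝ) * t + m) := by
    rw [hA₁, hYlaw, hqY, qSet_zero_cdf hmono]
  have hB₂ : A₂ = Ioo (√(v : ℝ) * t + m) (√(v : ℝ) * (-t) + m) := by
    rw [hA₂, hYlaw, hqY', hqY, qSet_cdf_cdf hmono]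
  have hB₃ : A₃ = Ioi (√(v : ℝ) * (-t) + m) := by
    rw [hA₃, hYlaw, hqY', qSet_cdf_one hmono]
  have hC₁ : (fun x ↦ √(v : ℝ) * x + m) ⁻¹' A₁ = Iio t := by
    ext x
    simp [hB₁, hσ]
  have hC₂ : (fun x ↦ √(v : ℝ) * x + m) ⁻¹' A₂ = Ioo t (-t) := by
    ext x
    rw [hB₂]
    simp only [mem_preimage, mem_Ioo, add_lt_add_iff_right, mul_lt_mul_iff_right₀ hσ]
  have hC₃ : (fun x ↦ √(v : ℝ) * x + m) ⁻¹' A₃ = (fun x ↦ -x) ⁻¹' Iio t := by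
    ext x
    rw [hB₃]
    simp only [mem_preimage, mem_Ioi, mem_Iio, add_lt_add_iff_right, mul_lt_mul_iff_right₀ hσ]
    exact neg_lt
  have := isOpenPosMeasure_gaussianReal m hv
  have hpos {A : Set ℝ} (hA : IsOpen A) (hne : A.Nonempty) : gaussianReal m v A ≠ 0 :=
    (hA.measure_pos _ hne).ne'
  have hO₁ : IsOpen A₁ := hB₁ ▸ isOpen_Iio
  have hO₂ : IsOpen A₂ := hB₂ ▸ isOpen_Ioo
  have hO₃ : IsOpen A₃ := hB₃ ▸ isOpen_Ioi
  have hP₁ := hpos hO₁ (hB₁ ▸ nonempty_Iio)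
  have hP₂ := hpos hO₂ (hB₂ ▸ nonempty_Ioo.2
    (by simpa only [add_lt_add_iff_right, mul_lt_mul_iff_right₀ hσ] using htneg))
  have hP₃ := hpos hO₃ (hB₃ ▸ nonempty_Ioi)
  have hV₁₂ : Var[fun x ↦ x; (gaussianReal m v)[|A₁]]
      = Var[fun x ↦ x; (gaussianReal m v)[|A₂]] := by
    rw [variance_cond_gaussianReal m hO₁.measurableSet hP₁,
      variance_cond_gaussianReal m hO₂.measurableSet hP₂, hC₁, hC₂]
    rw [← ht', ← ht, stdNormalQuantile_cdf, stdNormalQuantile_cdf] at hqdef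
    rw [hqdef]
  have hV₁₃ : Var[fun x ↦ x; (gaussianReal m v)[|A₁]]
      = Var[fun x ↦ x; (gaussianReal m v)[|A₃]] := by
    rw [variance_cond_gaussianReal m hO₁.measurableSet hP₁,
      variance_cond_gaussianReal m hO₃.measurableSet hP₃, hC₁, hC₃,
      variance_cond_gaussianReal_neg 1 measurableSet_Iio]
  have hXi (l : Fin k) : Measurable fun ω ↦ X ω l := (measurable_pi_apply l).comp hXmeas
  have hXlaw : HasGaussianLaw X ℙ :=
    ⟨isGaussian_map_of_linear_combinations hXmeas fun c ↦ ⟨_, _, hGauss c⟩⟩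
  have hG : HasGaussianLaw (fun ω ↦ ((X ω i, X ω j), Y ω)) ℙ := by
    rw [hY]
    have h := hXlaw.map_fun (((ContinuousLinearMap.proj (R := ℝ) i).prod
      (ContinuousLinearMap.proj j)).prod
        (∑ l, α l • ContinuousLinearMap.proj (R := ℝ) (φ := fun _ : Fin k ↦ ℝ) l))
    simpa using h
  have key {A : Set ℝ} (hA : IsOpen A) (hA0 : gaussianReal m v A ≠ 0) :=
    covariance_cond_preimage_of_hasGaussianLaw hG (hXi i) (hXi j) hYmeas hVarYpos.ne'
      hA.measurableSet (by rwa [← Measure.map_apply hYmeas hA.measurableSet, hYlaw])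
  change cov[_, _; _] = cov[_, _; _] ∧ cov[_, _; _] = cov[_, _; _]
  rw [key hO₁ hP₁, key hO₂ hP₂, key hO₃ hP₃, hYlaw, ← hV₁₂, ← hV₁₃]
  exact ⟨rfl, rfl⟩
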